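/- The rank of the abelian group C_W = ker φ equals c(W); that is, the ℚ-vector space C_W ⊗_ℤ ℚ has dimension c(W). -/

import Mathlib

open Quandles Rack CoxeterSystem

variable {B : Type} [Fintype B] {W : Type} [Group W] {M : CoxeterMatrix B}

/-- The Coxeter quandle `Q_W`: the set of reflections of `W`, with operation given by
conjugation. (Since reflections are involutions, `x ◃ y = x y x⁻¹ = x⁻¹ y x`.) -/
def CoxeterQuandle (cs : CoxeterSystem M W) : Type := {w : W // cs.IsReflection w}

instance (cs : CoxeterSystem M W) : Quandle (CoxeterQuandle cs) where
  act x y := ⟨x.1 * y.1 * x.1⁻¹, y.2.conj x.1⟩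
  self_distrib := by
    rintro ⟨x, _⟩ ⟨y, _⟩ ⟨z, _⟩
    apply Subtype.ext
    show x * (y * z * y⁻¹) * x⁻¹ = (x * y * x⁻¹) * (x * z * x⁻¹) * (x * y * x⁻¹)⁻¹
    group
  invAct x y := ⟨x.1⁻¹ * y.1 * x.1, by simpa using y.2.conj x.1⁻¹⟩
  left_inv := by
    rintro ⟨x, _⟩ ⟨y, _⟩
    apply Subtype.ext
    show x⁻¹ * (x * y * x⁻¹) * x = y
    group
  right_inv := by
    rintro ⟨x, _⟩ ⟨y, _⟩
    apply Subtype.ext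
    show x * (x⁻¹ * y * x) * x⁻¹ = y
    group
  fix := by
    rintro ⟨x, hx⟩
    apply Subtype.ext
    show x * x * x⁻¹ = x
    group

/-- The canonical generator `e_x` of the adjoint (enveloping) group `Ad(Q_W)` of the
Coxeter quandle, associated with the reflection `x`. -/
def coxE (cs : CoxeterSystem M W) (x : CoxeterQuandle cs) :
    EnvelGroup (CoxeterQuandle cs) :=
  Rack.toEnvelGroup (CoxeterQuandle cs) x

set_option linter.unusedSectionVars false

theorem envel_ext (cs : CoxeterSystem M W) {H : Type*} [Group H]
    (f g : EnvelGroup (CoxeterQuandle cs) →* H)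
    (h : ∀ x, f (coxE cs x) = g (coxE cs x)) : f = g := by
  apply toEnvelGroup.map.symm.injective
  apply DFunLike.ext
  exact h

theorem coxE_act (cs : CoxeterSystem M W) (x y : CoxeterQuandle cs) :
    coxE cs x * coxE cs y * (coxE cs x)⁻¹ = coxE cs (x ◃ y) :=
  ((toEnvelGroup (CoxeterQuandle cs)).map_act' (x := x) (y := y)).symm

theorem envel_closure (cs : CoxeterSystem M W) :
    Subgroup.closure (Set.range (coxE cs)) = ⊤ := by
  rw [Subgroup.eq_top_iff']
  intro x
  refine Quotient.inductionOn x fun x => ?_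
  induction x with
  | unit => exact Subgroup.one_mem _
  | incl x => exact Subgroup.subset_closure ⟨x, rfl⟩
  | mul a b iha ihb => exact Subgroup.mul_mem _ iha ihb
  | inv a iha => exact Subgroup.inv_mem _ iha

theorem dihedral_rel {H : Type*} [Group H] {a b : H} (ha : a * a = 1) (hb : b * b = 1) (k : ℕ) :
    (a * b) ^ k * a * ((a * b) ^ k)⁻¹ = (a * b) ^ (2 * k) * a := by
  have hc : a * ((a * b) ^ k)⁻¹ * a⁻¹ = (a * b) ^ k := by
    rw [← inv_pow, ← conj_pow, mul_inv_rev, inv_eq_of_mul_eq_one_left ha,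
      inv_eq_of_mul_eq_one_left hb, mul_assoc, mul_assoc, ha, mul_one]
  rw [mul_assoc, mul_inv_eq_iff_eq_mul.1 hc, two_mul, pow_add, mul_assoc]

section aux
variable (cs : CoxeterSystem M W)
    (φ : EnvelGroup (CoxeterQuandle cs) →* W)
    (hφ : ∀ x : CoxeterQuandle cs, φ (coxE cs x) = x.1)
include hφ

theorem coxE_conj (g : EnvelGroup (CoxeterQuandle cs)) (x : CoxeterQuandle cs) :
    g * coxE cs x * g⁻¹ = coxE cs ⟨φ g * x.1 * (φ g)⁻¹, x.2.conj _⟩ := by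
  have hg : g ∈ Subgroup.closure (Set.range (coxE cs)) := by rw [envel_closure]; trivial
  induction hg using Subgroup.closure_induction generalizing x with
  | mem y hy =>
    obtain ⟨y, rfl⟩ := hy
    rw [coxE_act]
    congr 1
    apply Subtype.ext
    simp only [hφ]
    rfl
  | one => simp; rfl
  | mul a b _ _ iha ihb =>
    have : a * b * coxE cs x * (a * b)⁻¹ = a * (b * coxE cs x * b⁻¹) * a⁻¹ := by group
    rw [this, ihb]
    refine (iha _).trans ?_
    congr 1
    apply Subtype.ext
    simp [mul_assoc]
  | inv a _ ih =>
    have h := ih ⟨φ a⁻¹ * x.1 * (φ a⁻¹)⁻¹, x.2.conj _⟩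
    have h2 : (⟨φ a * (φ a⁻¹ * x.1 * (φ a⁻¹)⁻¹) * (φ a)⁻¹,
      (x.2.conj _).conj _⟩ : CoxeterQuandle cs) = x := by
      apply Subtype.ext; simp [mul_assoc]
    have h3 : coxE cs ⟨φ a * (φ a⁻¹ * x.1 * (φ a⁻¹)⁻¹) * (φ a)⁻¹,
      (x.2.conj _).conj _⟩ = coxE cs x := congrArg _ h2
    rw [← h3]
    rw [← h]; group

theorem ker_central (a : EnvelGroup (CoxeterQuandle cs)) (ha : φ a = 1)
    (g : EnvelGroup (CoxeterQuandle cs)) : a * g = g * a := by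
  have hg : g ∈ Subgroup.closure (Set.range (coxE cs)) := by rw [envel_closure]; trivial
  have : Subgroup.closure (Set.range (coxE cs)) ≤ Subgroup.centralizer {a} := by
    rw [Subgroup.closure_le]
    rintro _ ⟨x, rfl⟩
    rw [SetLike.mem_coe, Subgroup.mem_centralizer_singleton_iff]
    have h := coxE_conj cs φ hφ a x
    have h2 : (⟨φ a * x.1 * (φ a)⁻¹, x.2.conj _⟩ : CoxeterQuandle cs) = x := by
      apply Subtype.ext; simp [ha]
    have h3 := congrArg (coxE cs) h2
    rw [h3, mul_inv_eq_iff_eq_mul] at h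
    first | exact h | exact h.symm
  have h := this hg
  rw [Subgroup.mem_centralizer_singleton_iff] at h
  first | exact h | exact h.symm

theorem sq_ker (x : CoxeterQuandle cs) : φ (coxE cs x ^ 2) = 1 := by
  rw [map_pow, hφ]; exact x.2.pow_two

theorem sq_conj (x y : CoxeterQuandle cs) (h : IsConj x.1 y.1)
    (hs : Function.Surjective φ) : coxE cs x ^ 2 = coxE cs y ^ 2 := by
  obtain ⟨w, hw⟩ := isConj_iff.1 h
  obtain ⟨g, rfl⟩ := hs w
  have h1 := coxE_conj cs φ hφ g x
  have h2 : (⟨φ g * x.1 * (φ g)⁻¹, x.2.conj _⟩ : CoxeterQuandle cs) = y := Subtype.ext hw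
  have h3 := congrArg (coxE cs) h2
  rw [← h3, ← h1, conj_pow, ← ker_central cs φ hφ _ (sq_ker cs φ hφ x) g]
  group

theorem phi_surj : Function.Surjective φ := by
  rw [← MonoidHom.range_eq_top, eq_top_iff, ← cs.subgroup_closure_range_simple,
    Subgroup.closure_le]
  rintro _ ⟨i, rfl⟩
  exact ⟨coxE cs ⟨_, cs.isReflection_simple i⟩, hφ _⟩

theorem mem_closure_sq (g : EnvelGroup (CoxeterQuandle cs)) (hg : φ g = 1) :
    g ∈ Subgroup.closure (Set.range fun x => coxE cs x ^ 2) := by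
  set A := Subgroup.closure (Set.range fun x => coxE cs x ^ 2) with hA
  have hAk : A ≤ φ.ker := by
    rw [hA, Subgroup.closure_le]
    rintro _ ⟨x, rfl⟩
    exact sq_ker cs φ hφ x
  have : A.Normal := ⟨fun n hn g => by
    rw [← ker_central cs φ hφ n (hAk hn) g]; simpa using hn⟩
  let q := QuotientGroup.mk' A
  have hsq : ∀ x, q (coxE cs x) * q (coxE cs x) = 1 := fun x => by
    rw [← map_mul, ← pow_two]
    exact (QuotientGroup.eq_one_iff _).2 (Subgroup.subset_closure ⟨x, rfl⟩)
  let e : B → EnvelGroup (CoxeterQuandle cs) := fun i => coxE cs ⟨_, cs.isReflection_simple i⟩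
  have he : ∀ i, φ (e i) = cs.simple i := fun i => hφ _
  have hsqe : ∀ i, q (e i) * q (e i) = 1 := fun i => hsq _
  have hlift : M.IsLiftable (fun i => q (e i)) := by
    intro i j
    obtain ⟨k, hk | hk⟩ := Nat.even_or_odd' (M i j)
    · have h := coxE_conj cs φ hφ ((e i * e j) ^ k) ⟨_, cs.isReflection_simple i⟩
      have h2 : (⟨φ ((e i * e j) ^ k) * cs.simple i * (φ ((e i * e j) ^ k))⁻¹,
          (cs.isReflection_simple i).conj _⟩ : CoxeterQuandle cs)
          = ⟨_, cs.isReflection_simple i⟩ := by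
        apply Subtype.ext
        simp only [map_pow, map_mul, he]
        rw [dihedral_rel (cs.simple_mul_simple_self i) (cs.simple_mul_simple_self j), ← hk,
          cs.simple_mul_simple_pow, one_mul]
      have h3 := congrArg q (h.trans (congrArg (coxE cs) h2))
      change q ((e i * e j) ^ k * e i * ((e i * e j) ^ k)⁻¹) = q (e i) at h3
      rw [map_mul, map_mul, map_inv, map_pow, map_mul, dihedral_rel (hsqe i) (hsqe j), ← hk] at h3
      simpa using h3
    · have h := coxE_conj cs φ hφ ((e i * e j) ^ k) ⟨_, cs.isReflection_simple i⟩
      have h2 : (⟨φ ((e i * e j) ^ k) * cs.simple i * (φ ((e i * e j) ^ k))⁻¹,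
          (cs.isReflection_simple i).conj _⟩ : CoxeterQuandle cs)
          = ⟨_, cs.isReflection_simple j⟩ := by
        apply Subtype.ext
        simp only [map_pow, map_mul, he]
        rw [dihedral_rel (cs.simple_mul_simple_self i) (cs.simple_mul_simple_self j)]
        have := cs.simple_mul_simple_pow i j
        rw [hk, pow_succ, ← mul_assoc, mul_eq_one_iff_eq_inv] at this
        rw [this, cs.inv_simple]
      have h3 := congrArg q (h.trans (congrArg (coxE cs) h2))
      change q ((e i * e j) ^ k * e i * ((e i * e j) ^ k)⁻¹) = q (e j) at h3
      rw [map_mul, map_mul, map_inv, map_pow, map_mul, dihedral_rel (hsqe i) (hsqe j)] at h3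
      rw [hk, pow_succ, ← mul_assoc, h3]
      exact hsq _
  let ψ : W →* EnvelGroup (CoxeterQuandle cs) ⧸ A := cs.lift ⟨_, hlift⟩
  have hψ : ∀ i, ψ (cs.simple i) = q (e i) := fun i => cs.lift_apply_simple hlift i
  let φ' : EnvelGroup (CoxeterQuandle cs) ⧸ A →* W := QuotientGroup.lift A φ hAk
  have hφ' : ∀ g, φ' (q g) = φ g := fun g => rfl
  have hid : φ'.comp ψ = MonoidHom.id W := by
    apply cs.ext_simple
    intro i
    rw [MonoidHom.comp_apply, hψ, hφ', he]; rfl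
  have hcomp : q = ψ.comp φ := by
    apply envel_ext
    rintro ⟨x, w, i, rfl⟩
    obtain ⟨g, hg⟩ := QuotientGroup.mk'_surjective A (ψ w)
    have hgw : φ g = w := by
      rw [← hφ', hg]; exact DFunLike.congr_fun hid w
    subst hgw
    refine Eq.trans ?_ (congrArg ψ (hφ _)).symm
    have h := coxE_conj cs φ hφ g ⟨_, cs.isReflection_simple i⟩
    have h' := congrArg q h
    change q (g * e i * g⁻¹) = _ at h'
    refine h'.symm.trans ?_
    change _ = ψ (φ g * cs.simple i * (φ g)⁻¹)
    rw [map_mul, map_mul, map_inv, map_mul, map_mul, map_inv, hψ, ← hg]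
  have : q g = 1 := by rw [hcomp, MonoidHom.comp_apply, hg, map_one]
  exact (QuotientGroup.eq_one_iff _).1 this

end aux

/-- The set of conjugacy classes of reflections. -/
abbrev ReflClass (cs : CoxeterSystem M W) : Type :=
  {c : ConjClasses W // ∃ t : W, cs.IsReflection t ∧ ConjClasses.mk t = c}

/-- The class of a reflection. -/
def reflClass (cs : CoxeterSystem M W) (x : CoxeterQuandle cs) : ReflClass cs :=
  ⟨ConjClasses.mk x.1, x.1, x.2, rfl⟩

/-- The degree map. -/
noncomputable def degHom (cs : CoxeterSystem M W) :
    EnvelGroup (CoxeterQuandle cs) →* Multiplicative (ReflClass cs →₀ ℤ) :=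
  toEnvelGroup.map
    { toFun := fun x => (Multiplicative.ofAdd (Finsupp.single (reflClass cs x) (1 : ℤ)) :
        Multiplicative (ReflClass cs →₀ ℤ))
      map_act' := by
        intro x y
        have h : reflClass cs (x ◃ y) = reflClass cs y := by
          apply Subtype.ext
          exact (ConjClasses.mk_eq_mk_iff_isConj.2 (isConj_iff.2 ⟨x.1, rfl⟩)).symm
        rw [h, Quandle.conj_act_eq_conj]
        exact (mul_inv_cancel_comm _ _).symm }

theorem degHom_coxE (cs : CoxeterSystem M W) (x : CoxeterQuandle cs) :
    degHom cs (coxE cs x) = Multiplicative.ofAdd (Finsupp.single (reflClass cs x) (1 : ℤ)) := rfl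

open TensorProduct in
/-- The rank of the abelian group `C_W = ker φ` equals `c(W)`: the `ℚ`-vector space
`C_W ⊗_ℤ ℚ` has dimension `c(W)`, the number of `W`-conjugacy classes of reflections.
(Since `C_W` is central it is abelian, as the first conjunct asserts, so it coincides
with its abelianization, which we use to form the tensor product.) -/
theorem stmt_7 (cs : CoxeterSystem M W)
    (φ : EnvelGroup (CoxeterQuandle cs) →* W)
    (hφ : ∀ x : CoxeterQuandle cs, φ (coxE cs x) = x.1) :
    (∀ a b : φ.ker, a * b = b * a) ∧
    Module.finrank ℚ (ℚ ⊗[ℤ] Additive (Abelianization φ.ker)) =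
      Nat.card {c : ConjClasses W // ∃ t : W, cs.IsReflection t ∧ ConjClasses.mk t = c} := by
  refine ⟨fun a b => Subtype.ext (ker_central cs φ hφ a.1 a.2 b.1), ?_⟩
  classical
  change _ = Nat.card (ReflClass cs)
  have hrep : ∀ c : ReflClass cs, ∃ x : CoxeterQuandle cs, reflClass cs x = c := by
    rintro ⟨c, t, ht, rfl⟩
    exact ⟨⟨t, ht⟩, rfl⟩
  choose r hr using hrep
  let v : CoxeterQuandle cs → Additive (Abelianization φ.ker) := fun x =>
    Additive.ofMul (Abelianization.of ⟨coxE cs x ^ 2, sq_ker cs φ hφ x⟩)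
  let f : (ReflClass cs →₀ ℤ) →ₗ[ℤ] Additive (Abelianization φ.ker) :=
    Finsupp.linearCombination ℤ (fun c => v (r c))
  let d : Additive (Abelianization φ.ker) →+ (ReflClass cs →₀ ℤ) :=
    MonoidHom.toAdditiveLeft (Abelianization.lift ((degHom cs).comp φ.ker.subtype))
  have hdv : ∀ x, d (v x) = Finsupp.single (reflClass cs x) (2 : ℤ) := by
    intro x
    change Multiplicative.toAdd (degHom cs (coxE cs x ^ 2)) = _
    rw [map_pow, degHom_coxE, toAdd_pow, toAdd_ofAdd]
    simp
  have hdf : d.toIntLinearMap ∘ₗ f = (2 : ℤ) • LinearMap.id := by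
    apply Finsupp.lhom_ext
    intro c n
    simp only [f, LinearMap.comp_apply, Finsupp.linearCombination_single, map_smul]
    change n • d (v (r c)) = _
    rw [hdv, hr]
    simp [mul_comm]
  have hinj : Function.Injective f := by
    intro a b hab
    have h1 := LinearMap.congr_fun hdf a
    have h2 := LinearMap.congr_fun hdf b
    rw [LinearMap.comp_apply, hab] at h1
    rw [LinearMap.comp_apply, h1] at h2
    simp only [LinearMap.smul_apply, LinearMap.id_apply] at h2
    ext c
    have := DFunLike.congr_fun h2 c
    simp at this
    exact this
  have hAk : Subgroup.closure (Set.range fun x => coxE cs x ^ 2) ≤ φ.ker := by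
    rw [Subgroup.closure_le]
    rintro _ ⟨x, rfl⟩
    exact sq_ker cs φ hφ x
  have hsurj : Function.Surjective f := by
    intro z
    obtain ⟨⟨k, hk⟩, rfl⟩ : ∃ k : φ.ker, Additive.ofMul (Abelianization.of k) = z :=
      QuotientGroup.mk_surjective z.toMul
    suffices H : ∀ h : φ k = 1, Additive.ofMul (Abelianization.of (⟨k, h⟩ : φ.ker)) ∈
        LinearMap.range f from H hk
    have hmem := mem_closure_sq cs φ hφ k hk
    clear hk
    induction hmem using Subgroup.closure_induction with
    | mem y hy =>
      obtain ⟨x, rfl⟩ := hy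
      intro h
      refine ⟨Finsupp.single (reflClass cs x) 1, ?_⟩
      simp only [f, Finsupp.linearCombination_single, one_smul, v]
      congr 3
      apply sq_conj cs φ hφ _ _ _ (phi_surj cs φ hφ)
      exact ConjClasses.mk_eq_mk_iff_isConj.1 (congrArg Subtype.val (hr (reflClass cs x)))
    | one => 
      intro h
      exact Submodule.zero_mem _
    | mul a b ha hb iha ihb =>
      intro h
      exact Submodule.add_mem _ (iha (hAk ha)) (ihb (hAk hb))
    | inv a ha iha =>
      intro h
      exact Submodule.neg_mem _ (iha (hAk ha))
  let E := LinearEquiv.ofBijective f ⟨hinj, hsurj⟩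
  let b : Module.Basis (ReflClass cs) ℤ (Additive (Abelianization φ.ker)) := ⟨E.symm⟩
  rw [Module.finrank_eq_nat_card_basis (b.baseChange ℚ)]
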